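/- Let G be a finite powerful 2-group and i ≥ 1. Then the quotient group Ω_i(G⁴) / (Ω_i(G⁴))⁴ is abelian. -/

import Mathlib

/-!
If `N` is a normal subgroup of a finite powerful 2-group `G` and `N ≤ G^{2^k}`, then
`[N, N] ≤ N^{2^k}`; the theorem is the case `k = 2`, `N = Ω_i(G⁴)`.

Put `D n = G^{2^n}`. In a powerful 2-group `[D i, D j] ≤ D (i + j + 2)`, and every element of `D n`
is a `2^n`-th power. So the elements of `N` are powers `g^{2^k}`, and modulo `N^{2^k}` such a `g`
satisfies `g^{2^{2k}} = 1`. It therefore suffices to show that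
`g^{2^m} = h^{2^m} = 1`, `2 ≤ m ≤ i + j` imply `[g^{2^i}, h^{2^j}] = 1`.

Use induction on `|G|`. Try to prove `[D i, D j] ≤ D n` for all `i + j ≥ m` by induction on `n`. If
this holds for `n`, then `[x², w] ≡ [x, w]² ≡ [x, w²]` modulo `D (n + 1)` for `x ∈ D i`, `w ∈ D j`
and `i + j + 1 = m`. Hence `[x^{2^i}, w^{2^j}] ≡ [x, w^{2^m}]` whenever `i + j = m`. Let `P` be the
centralizer of `D m` modulo `D (n + 1)`. It contains every element of order dividing `2^m`, in
particular `g` and `h`.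

Moreover `P` is powerful. For `u, u' ∈ P` write `[u, u'] = t⁴`. As `[P, D (m - 2)] ≤ D m`, the three
subgroups lemma gives `[t⁴, w^{2^{m-2}}] ≡ 1` for all `w`, that is, `[t, w^{2^m}] ≡ 1`, so `t ∈ P`.
If `P ≠ G`, then the induction hypothesis applies to `P`; if `P = G`, then the step from `n` to
`n + 1` goes through. If all steps do, then `[g^{2^i}, h^{2^j}]` lies in `D n = 1` for large `n`.
-/

/-- The subgroup generated by the `n`-th powers of the elements of `H`. -/
def subgroupPow {G : Type*} [Group G] (H : Subgroup G) (n : ℕ) : Subgroup G :=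
  Subgroup.closure {x | ∃ h ∈ H, h ^ n = x}

/-- `Ω_i(H)`: the subgroup generated by the elements of `H` whose order divides `p ^ i`. -/
def omegaSubgroup {G : Type*} [Group G] (p i : ℕ) (H : Subgroup G) : Subgroup G :=
  Subgroup.closure {x | x ∈ H ∧ x ^ p ^ i = 1}

/-- A finite `p`-group `G` is powerful if `[G,G] ≤ G^p` when `p` is odd,
and `[G,G] ≤ G^4` when `p = 2`. -/
def IsPowerful (p : ℕ) (G : Type*) [Group G] : Prop :=
  if p = 2 then commutator G ≤ subgroupPow (⊤ : Subgroup G) 4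
  else commutator G ≤ subgroupPow (⊤ : Subgroup G) p

/-- The subgroup of `n`-th powers of the whole group is normal (indeed characteristic). -/
instance subgroupPow_top_normal {G : Type*} [Group G] (n : ℕ) :
    (subgroupPow (⊤ : Subgroup G) n).Normal := by
  constructor
  intro x hx g
  have key : Subgroup.map (MulAut.conj g).toMonoidHom (subgroupPow (⊤ : Subgroup G) n)
      ≤ subgroupPow (⊤ : Subgroup G) n := by
    rw [subgroupPow, MonoidHom.map_closure]
    apply Subgroup.closure_le _ |>.mpr
    rintro y ⟨z, ⟨h, -, rfl⟩, rfl⟩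
    exact Subgroup.subset_closure ⟨(MulAut.conj g) h, trivial, by
      simp [((MulAut.conj g).toMonoidHom.map_pow h n).symm]⟩
  have hmem : (MulAut.conj g) x ∈
      Subgroup.map (MulAut.conj g).toMonoidHom (subgroupPow (⊤ : Subgroup G) n) :=
    Subgroup.mem_map_of_mem _ hx
  simpa [MulAut.conj_apply] using key hmem

/-- A powerfully central chain `{1} = H 0 ≤ H 1 ≤ ⋯ ≤ H n = G` of length `n`:
`[H (k+1), G] ≤ (H k)^p` for all `k < n`. -/
def IsPowerfullyCentralChain (p : ℕ) {G : Type*} [Group G] (n : ℕ) (H : ℕ → Subgroup G) : Prop :=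
  H 0 = ⊥ ∧ H n = ⊤ ∧ (∀ k, k < n → H k ≤ H (k + 1)) ∧
    ∀ k, k < n → ⁅H (k + 1), (⊤ : Subgroup G)⁆ ≤ subgroupPow (H k) p

/-- A group is powerfully nilpotent if it is powerful and admits a powerfully central chain. -/
def IsPowerfullyNilpotent (p : ℕ) (G : Type*) [Group G] : Prop :=
  IsPowerful p G ∧ ∃ (n : ℕ) (H : ℕ → Subgroup G), IsPowerfullyCentralChain p n H

/-- The powerful nilpotency class: the least possible length of a powerfully central chain. -/
noncomputable def powerfulNilpotencyClass (p : ℕ) (G : Type*) [Group G] : ℕ :=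
  sInf {n | ∃ H : ℕ → Subgroup G, IsPowerfullyCentralChain p n H}

open scoped commutatorElement

section Commutators

variable {G : Type*} [Group G]

theorem commutatorElement_sq_left (x y : G) : ⁅x ^ 2, y⁆ = ⁅x, ⁅x, y⁆⁆ * ⁅x, y⁆ ^ 2 := by
  simp only [commutatorElement_def, pow_two]; group

theorem commutatorElement_mem_comm {K : Subgroup G} {x y : G} : ⁅x, y⁆ ∈ K ↔ ⁅y, x⁆ ∈ K := by
  rw [← commutatorElement_inv, K.inv_mem_iff]

theorem commutatorElement_sq_left_mem_iff {K : Subgroup G} {x y : G} (h : ⁅x, ⁅x, y⁆⁆ ∈ K) :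
    ⁅x ^ 2, y⁆ ∈ K ↔ ⁅x, y⁆ ^ 2 ∈ K := by
  rw [commutatorElement_sq_left, K.mul_mem_cancel_left h]

theorem commutatorElement_sq_left_mem_iff_sq_right_mem {K : Subgroup G} {x y : G}
    (hx : ⁅x, ⁅x, y⁆⁆ ∈ K) (hy : ⁅y, ⁅y, x⁆⁆ ∈ K) : ⁅x ^ 2, y⁆ ∈ K ↔ ⁅x, y ^ 2⁆ ∈ K := by
  rw [commutatorElement_sq_left_mem_iff hx, commutatorElement_mem_comm (x := x),
    commutatorElement_sq_left_mem_iff hy, ← commutatorElement_inv, inv_pow, K.inv_mem_iff]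

/-- The centralizer of `T` modulo the normal subgroup `K`: the preimage in `G` of the centralizer
of the image of `T` in `G ⧸ K`. -/
def centralizerMod (K : Subgroup G) [K.Normal] (T : Subgroup G) : Subgroup G :=
  (Subgroup.centralizer (T.map (QuotientGroup.mk' K) : Set (G ⧸ K))).comap (QuotientGroup.mk' K)

theorem mem_centralizerMod {K : Subgroup G} [K.Normal] {T : Subgroup G} {x : G} :
    x ∈ centralizerMod K T ↔ ∀ t ∈ T, ⁅x, t⁆ ∈ K := by
  simp only [centralizerMod, Subgroup.mem_comap, Subgroup.mem_centralizer_iff_commutator_eq_one,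
    Subgroup.coe_map, Set.forall_mem_image, SetLike.mem_coe, ← map_commutatorElement]
  simp only [QuotientGroup.mk'_apply, QuotientGroup.eq_one_iff, commutatorElement_mem_comm]

theorem le_centralizerMod_iff {H K T : Subgroup G} [K.Normal] :
    H ≤ centralizerMod K T ↔ ⁅H, T⁆ ≤ K := by
  simp only [Subgroup.commutator_le, ← mem_centralizerMod]; rfl

theorem commutator_commutator_le_of_rotate {H₁ H₂ H₃ K : Subgroup G} [K.Normal]
    (h₁ : ⁅⁅H₂, H₃⁆, H₁⁆ ≤ K) (h₂ : ⁅⁅H₃, H₁⁆, H₂⁆ ≤ K) : ⁅⁅H₁, H₂⁆, H₃⁆ ≤ K := by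
  rw [← QuotientGroup.ker_mk' K, ← Subgroup.map_eq_bot_iff] at h₁ h₂ ⊢
  simp only [Subgroup.map_commutator] at h₁ h₂ ⊢
  exact Subgroup.commutator_commutator_eq_bot_of_rotate h₁ h₂

theorem le_of_le_sup_commutator_top [Group.IsNilpotent G] {H K : Subgroup G} [K.Normal]
    (h : H ≤ K ⊔ ⁅H, ⊤⁆) : H ≤ K := by
  have le_sup_lowerCentralSeries : ∀ n, H ≤ K ⊔ (⊤ : Subgroup G).lowerCentralSeries n := by
    intro n
    induction n with
    | zero => simp
    | succ n ih =>
      refine h.trans (sup_le le_sup_left (le_centralizerMod_iff.1 (ih.trans (sup_le ?_ ?_))))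
      · exact le_centralizerMod_iff.2 ((Subgroup.commutator_le_left K ⊤).trans le_sup_left)
      · exact le_centralizerMod_iff.2 le_sup_right
  obtain ⟨n, hn⟩ := Subgroup.nilpotent_iff_lowerCentralSeries.1 ‹Group.IsNilpotent G›
  simpa only [hn, sup_bot_eq] using le_sup_lowerCentralSeries n

end Commutators

section Powers

variable {G G' : Type*} [Group G] [Group G']

theorem pow_mem_subgroupPow {H : Subgroup G} {x : G} (hx : x ∈ H) (n : ℕ) :
    x ^ n ∈ subgroupPow H n :=
  Subgroup.subset_closure ⟨x, hx, rfl⟩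

theorem subgroupPow_le_iff {H K : Subgroup G} {n : ℕ} :
    subgroupPow H n ≤ K ↔ ∀ x ∈ H, x ^ n ∈ K := by
  simp [subgroupPow, Subgroup.closure_le, Set.subset_def]

theorem subgroupPow_mono {H K : Subgroup G} (h : H ≤ K) (n : ℕ) :
    subgroupPow H n ≤ subgroupPow K n :=
  subgroupPow_le_iff.2 fun _ hx => pow_mem_subgroupPow (h hx) n

theorem subgroupPow_one (H : Subgroup G) : subgroupPow H 1 = H := by
  simp [subgroupPow]

theorem map_subgroupPow (f : G →* G') (H : Subgroup G) (n : ℕ) :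
    (subgroupPow H n).map f = subgroupPow (H.map f) n := by
  apply le_antisymm
  · rw [Subgroup.map_le_iff_le_comap, subgroupPow_le_iff]
    intro x hx
    rw [Subgroup.mem_comap, map_pow]
    exact pow_mem_subgroupPow (Subgroup.mem_map_of_mem f hx) n
  · rw [subgroupPow_le_iff]
    rintro _ ⟨x, hx, rfl⟩
    exact ⟨x ^ n, pow_mem_subgroupPow hx n, map_pow f x n⟩

theorem map_subtype_subgroupPow_top (H : Subgroup G) (n : ℕ) :
    (subgroupPow (⊤ : Subgroup H) n).map H.subtype = subgroupPow H n := by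
  rw [map_subgroupPow, ← MonoidHom.range_eq_map, H.range_subtype]

theorem closure_normal_of_conj_mem {S : Set G} (hS : ∀ s ∈ S, ∀ g : G, g * s * g⁻¹ ∈ S) :
    (Subgroup.closure S).Normal := by
  refine ⟨fun x hx g => ?_⟩
  have closure_le_comap :
      Subgroup.closure S ≤ (Subgroup.closure S).comap (MulAut.conj g).toMonoidHom :=
    (Subgroup.closure_le _).2 fun s hs => Subgroup.subset_closure (hS s hs g)
  exact closure_le_comap hx

theorem subgroupPow_normal {H : Subgroup G} [hH : H.Normal] (n : ℕ) :
    (subgroupPow H n).Normal := by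
  apply closure_normal_of_conj_mem
  rintro _ ⟨h, hh, rfl⟩ g
  exact ⟨g * h * g⁻¹, hH.conj_mem h hh g, conj_pow⟩

theorem omegaSubgroup_normal (p i : ℕ) {H : Subgroup G} [hH : H.Normal] :
    (omegaSubgroup p i H).Normal := by
  apply closure_normal_of_conj_mem
  rintro x ⟨hx, hx_pow⟩ g
  exact ⟨hH.conj_mem x hx g, by rw [conj_pow, hx_pow, mul_one, mul_inv_cancel]⟩

theorem omegaSubgroup_le (p i : ℕ) (H : Subgroup G) : omegaSubgroup p i H ≤ H :=
  (Subgroup.closure_le H).2 fun _ hx => hx.1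

theorem commutator_subgroupPow_two_le {H L K : Subgroup G} [K.Normal]
    (hcomm : ⁅H, ⁅H, L⁆⁆ ≤ K) (hsq : subgroupPow ⁅H, L⁆ 2 ≤ K) : ⁅subgroupPow H 2, L⁆ ≤ K := by
  rw [← le_centralizerMod_iff, subgroupPow_le_iff]
  intro x hx
  rw [mem_centralizerMod]
  intro y hy
  have hxy : ⁅x, y⁆ ∈ ⁅H, L⁆ := Subgroup.commutator_mem_commutator hx hy
  rw [commutatorElement_sq_left_mem_iff (hcomm (Subgroup.commutator_mem_commutator hx hxy))]
  exact hsq (pow_mem_subgroupPow hxy 2)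

theorem exists_normal_index_eq_prime {p : ℕ} [hp : Fact p.Prime] [Finite G] [Nontrivial G]
    (hG : IsPGroup p G) : ∃ K : Subgroup G, K.Normal ∧ K.index = p := by
  obtain ⟨m, hm, hcard⟩ := hG.nontrivial_iff_card.1 ‹Nontrivial G›
  obtain ⟨m, rfl⟩ := Nat.exists_eq_succ_of_ne_zero hm.ne'
  obtain ⟨K, hK⟩ := Sylow.exists_subgroup_card_pow_prime (G := G) p (n := m)
    (hcard ▸ pow_dvd_pow p m.le_succ)
  have hindex : K.index = p := by
    have := K.card_mul_index
    rw [hK, hcard, Nat.succ_eq_add_one, pow_succ] at this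
    exact Nat.eq_of_mul_eq_mul_left (pow_pos hp.out.pos m) this
  refine ⟨K, Subgroup.normal_of_index_eq_minFac_card ?_, hindex⟩
  rw [hindex, hcard, hp.out.pow_minFac m.succ_ne_zero]

theorem subgroupPow_prime_lt {p : ℕ} [hp : Fact p.Prime] [Finite G] (hG : IsPGroup p G)
    {H : Subgroup G} (hH : H ≠ ⊥) : subgroupPow H p < H := by
  have : Nontrivial H := H.nontrivial_iff_ne_bot.2 hH
  obtain ⟨K, hK, hindex⟩ := exists_normal_index_eq_prime (hG.to_subgroup H)
  have hK_top : K ≠ ⊤ := fun h => hp.out.ne_one (by rw [← hindex, h, Subgroup.index_top])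
  have hpow : subgroupPow ⊤ p ≤ K := subgroupPow_le_iff.2 fun x _ => hindex ▸ K.pow_index_mem x
  calc subgroupPow H p = (subgroupPow ⊤ p).map H.subtype := (map_subtype_subgroupPow_top H p).symm
    _ ≤ K.map H.subtype := Subgroup.map_mono hpow
    _ < (⊤ : Subgroup H).map H.subtype :=
      (Subgroup.map_lt_map_iff_of_injective H.subtype_injective).2 hK_top.lt_top
    _ = H := by rw [← MonoidHom.range_eq_map, H.range_subtype]

end Powers

section Powerful

variable {G G' : Type*} [Group G] [Group G']

theorem isPowerful_two_iff : IsPowerful 2 G ↔ commutator G ≤ subgroupPow (⊤ : Subgroup G) 4 := by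
  simp only [IsPowerful, if_true]

theorem IsPowerful.of_surjective {p : ℕ} (hG : IsPowerful p G) {f : G →* G'}
    (hf : Function.Surjective f) : IsPowerful p G' := by
  have map_le {n : ℕ} (h : commutator G ≤ subgroupPow (⊤ : Subgroup G) n) :
      commutator G' ≤ subgroupPow (⊤ : Subgroup G') n := by
    rw [← Subgroup.map_top_of_surjective f hf, ← map_subgroupPow, commutator_def,
      ← Subgroup.map_top_of_surjective f hf, ← Subgroup.map_commutator, ← commutator_def]
    exact Subgroup.map_mono h
  unfold IsPowerful at hG ⊢
  split_ifs at hG ⊢ <;> exact map_le hG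

end Powerful

section SqSeries

/-- The series `sqSeries G n` obtained from `G` by taking `n` times the subgroup generated by
the squares; in a powerful 2-group it is `G^{2^n}`. -/
def sqSeries (G : Type*) [Group G] : ℕ → Subgroup G
  | 0 => ⊤
  | n + 1 => subgroupPow (sqSeries G n) 2

variable {G : Type*} [Group G]

local notation "D" => sqSeries G

instance sqSeries_normal : ∀ n, (D n).Normal
  | 0 => inferInstanceAs (⊤ : Subgroup G).Normal
  | n + 1 => have := sqSeries_normal n; subgroupPow_normal 2

theorem sqSeries_antitone : Antitone (sqSeries G) :=
  antitone_nat_of_succ_le fun n => subgroupPow_le_iff.2 fun _ hx => (D n).pow_mem hx 2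

theorem sq_mem_sqSeries {n : ℕ} {x : G} (hx : x ∈ D n) : x ^ 2 ∈ D (n + 1) :=
  pow_mem_subgroupPow hx 2

theorem pow_mem_sqSeries (x : G) : ∀ n, x ^ 2 ^ n ∈ D n
  | 0 => Subgroup.mem_top _
  | n + 1 => by
    rw [pow_succ, pow_mul]
    exact sq_mem_sqSeries (pow_mem_sqSeries x n)

theorem subgroupPow_top_le_sqSeries (n : ℕ) : subgroupPow (⊤ : Subgroup G) (2 ^ n) ≤ D n :=
  subgroupPow_le_iff.2 fun x _ => pow_mem_sqSeries x n

theorem exists_sqSeries_eq_bot [Finite G] (hG : IsPGroup 2 G) : ∃ n, D n = ⊥ := by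
  have : Fact (Nat.Prime 2) := ⟨Nat.prime_two⟩
  obtain ⟨n, hn⟩ := WellFoundedLT.antitone_chain_condition (sqSeries_antitone (G := G))
  by_contra! hne
  exact (subgroupPow_prime_lt hG (hne n)).ne (hn (n + 1) n.le_succ).symm

variable [Group.IsNilpotent G]

theorem commutator_sqSeries_top_le (hG : IsPowerful 2 G) (n : ℕ) : ⁅D n, ⊤⁆ ≤ D (n + 2) := by
  induction n with
  | zero => exact (isPowerful_two_iff.1 hG).trans (subgroupPow_top_le_sqSeries 2)
  | succ n ih =>
    -- By nilpotency it suffices to argue modulo `⁅⁅D (n + 1), G⁆, G⁆`.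
    apply le_of_le_sup_commutator_top
    set K := D (n + 3) ⊔ ⁅⁅D (n + 1), (⊤ : Subgroup G)⁆, (⊤ : Subgroup G)⁆
    have hsq {H : Subgroup G} (hH : H ≤ D n) : subgroupPow ⁅H, (⊤ : Subgroup G)⁆ 2 ≤ K :=
      (subgroupPow_mono ((Subgroup.commutator_mono hH le_rfl).trans ih) 2).trans le_sup_left
    have hcomm : ⁅D (n + 2), (⊤ : Subgroup G)⁆ ≤ K := by
      refine commutator_subgroupPow_two_le ?_ (hsq (sqSeries_antitone n.le_succ))
      rw [Subgroup.commutator_comm]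
      exact (Subgroup.commutator_mono le_rfl le_top).trans le_sup_right
    refine commutator_subgroupPow_two_le ?_ (hsq le_rfl)
    rw [Subgroup.commutator_comm]
    exact (Subgroup.commutator_mono ih le_top).trans hcomm

theorem commutator_sqSeries_le (hG : IsPowerful 2 G) (i j : ℕ) : ⁅D i, D j⁆ ≤ D (i + j + 2) := by
  induction i with
  | zero =>
    rw [Subgroup.commutator_comm, zero_add]
    exact (Subgroup.commutator_mono le_rfl le_top).trans (commutator_sqSeries_top_le hG j)
  | succ i ih =>
    rw [add_right_comm i 1 j]
    refine commutator_subgroupPow_two_le ?_ (subgroupPow_mono ih 2)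
    calc ⁅D i, ⁅D i, D j⁆⁆ ≤ ⁅D (i + j + 2), ⊤⁆ := by
          rw [Subgroup.commutator_comm]
          exact Subgroup.commutator_mono ih le_top
      _ ≤ D (i + j + 4) := commutator_sqSeries_top_le hG _
      _ ≤ D (i + j + 1 + 2) := sqSeries_antitone (by omega)

theorem commute_mk_of_mem_sqSeries (hG : IsPowerful 2 G) {n : ℕ} {x : G} (hx : x ∈ D n) (y : G) :
    Commute (x : G ⧸ D (n + 2)) y := by
  rw [← commutatorElement_eq_one_iff_commute]
  exact (QuotientGroup.eq_one_iff _).2 (commutator_sqSeries_top_le hG n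
    (Subgroup.commutator_mem_commutator hx (Subgroup.mem_top y)))

theorem exists_mk_eq_mk_sq (hG : IsPowerful 2 G) {n : ℕ} {x : G} (hx : x ∈ D (n + 1)) :
    ∃ y ∈ D n, (x : G ⧸ D (n + 2)) = y ^ 2 := by
  -- Squaring is multiplicative on `D n` modulo `D (n + 2)`, because `D n` is central there.
  induction hx using Subgroup.closure_induction with
  | mem x hx =>
    obtain ⟨y, hy, rfl⟩ := hx
    exact ⟨y, hy, rfl⟩
  | one => exact ⟨1, one_mem _, by simp⟩
  | mul x x' _ _ ihx ihx' =>
    obtain ⟨y, hy, hxy⟩ := ihx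
    obtain ⟨y', hy', hxy'⟩ := ihx'
    refine ⟨y * y', mul_mem hy hy', ?_⟩
    rw [QuotientGroup.mk_mul, QuotientGroup.mk_mul, hxy, hxy',
      (commute_mk_of_mem_sqSeries hG hy y').mul_pow]
  | inv x _ ih =>
    obtain ⟨y, hy, hxy⟩ := ih
    exact ⟨y⁻¹, inv_mem hy, by rw [QuotientGroup.mk_inv, QuotientGroup.mk_inv, hxy, inv_pow]⟩

theorem exists_mk_add_eq_mk_sq (hG : IsPowerful 2 G) {k : ℕ} {x : G} (hx : x ∈ D (k + 1)) (n : ℕ) :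
    ∃ y ∈ D k, (x : G ⧸ D (k + n + 1)) = y ^ 2 := by
  induction n with
  | zero => exact ⟨1, one_mem _, by simpa using hx⟩
  | succ n ih =>
    obtain ⟨y, hy, hxy⟩ := ih
    obtain ⟨z, hz, hyz⟩ := exists_mk_eq_mk_sq hG (QuotientGroup.eq.1 hxy.symm)
    refine ⟨y * z, mul_mem hy (sqSeries_antitone (Nat.le_add_right k n) hz), ?_⟩
    calc (x : G ⧸ D (k + n + 2)) = y ^ 2 * ↑((y ^ 2)⁻¹ * x) := by
          rw [QuotientGroup.mk_mul, QuotientGroup.mk_inv, QuotientGroup.mk_pow, mul_inv_cancel_left]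
      _ = y ^ 2 * z ^ 2 := by rw [hyz]
      _ = ↑(y * z) ^ 2 := by
          rw [QuotientGroup.mk_mul, (commute_mk_of_mem_sqSeries hG hz y).symm.mul_pow]

theorem exists_sq_eq_of_mem_sqSeries (hG : IsPowerful 2 G) (hbot : ∃ n, D n = ⊥) {k : ℕ} {x : G}
    (hx : x ∈ D (k + 1)) : ∃ y ∈ D k, y ^ 2 = x := by
  obtain ⟨n, hn⟩ := hbot
  obtain ⟨y, hy, hxy⟩ := exists_mk_add_eq_mk_sq hG hx n
  have hmem : (y ^ 2)⁻¹ * x ∈ D n := sqSeries_antitone (by omega) (QuotientGroup.eq.1 hxy.symm)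
  rw [hn, Subgroup.mem_bot, inv_mul_eq_one] at hmem
  exact ⟨y, hy, hmem⟩

theorem mem_sqSeries_iff (hG : IsPowerful 2 G) (hbot : ∃ n, D n = ⊥) {n : ℕ} {x : G} :
    x ∈ D n ↔ ∃ y, y ^ 2 ^ n = x := by
  refine ⟨fun hx => ?_, fun ⟨y, hy⟩ => hy ▸ pow_mem_sqSeries y n⟩
  induction n generalizing x with
  | zero => exact ⟨x, pow_one x⟩
  | succ n ih =>
    obtain ⟨y, hy, rfl⟩ := exists_sq_eq_of_mem_sqSeries hG hbot hx
    obtain ⟨z, rfl⟩ := ih hy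
    exact ⟨z, by rw [pow_succ, pow_mul]⟩

end SqSeries

section CommutatorBound

/-- `[G^{2^i}, G^{2^j}] ≤ G^{2^n}` whenever `i + j ≥ m`, with `sqSeries G i` for `G^{2^i}`: for
fixed `m`, this is the statement proved by induction on `n`. -/
def CommutatorBound (G : Type*) [Group G] (m n : ℕ) : Prop :=
  ∀ i j, m ≤ i + j → ⁅sqSeries G i, sqSeries G j⁆ ≤ sqSeries G n

namespace CommutatorBound

variable {G : Type*} [Group G] {m n : ℕ}

local notation "D" => sqSeries G

theorem zero (m : ℕ) : CommutatorBound G m 0 := fun _ _ _ => le_top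

variable [Group.IsNilpotent G]

theorem commutator_le_succ (h : CommutatorBound G m n) (hG : IsPowerful 2 G) {i j : ℕ}
    (hij : m + 1 ≤ i + j) : ⁅D i, D j⁆ ≤ D (n + 1) := by
  have commutator_succ_le {i j : ℕ} (hij : m ≤ i + j) : ⁅D (i + 1), D j⁆ ≤ D (n + 1) := by
    refine commutator_subgroupPow_two_le ?_ (subgroupPow_mono (h i j hij) 2)
    calc ⁅D i, ⁅D i, D j⁆⁆ ≤ ⁅D n, ⊤⁆ := by
          rw [Subgroup.commutator_comm]
          exact Subgroup.commutator_mono (h i j hij) le_top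
      _ ≤ D (n + 2) := commutator_sqSeries_top_le hG n
      _ ≤ D (n + 1) := sqSeries_antitone (n + 1).le_succ
  rcases i with _ | i
  · obtain ⟨j, rfl⟩ := Nat.exists_eq_succ_of_ne_zero (n := j) (by omega)
    rw [Subgroup.commutator_comm]
    exact commutator_succ_le (by omega)
  · exact commutator_succ_le (by omega)

theorem sq_left_mem_iff (h : CommutatorBound G m n) (hG : IsPowerful 2 G) {i j : ℕ}
    (hij : i + j + 1 = m) {x y : G} (hx : x ∈ D i) (hy : y ∈ D j) :
    ⁅x ^ 2, y⁆ ∈ D (n + 1) ↔ ⁅x, y ^ 2⁆ ∈ D (n + 1) := by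
  have hxy : ⁅x, y⁆ ∈ D (i + j + 2) :=
    commutator_sqSeries_le hG i j (Subgroup.commutator_mem_commutator hx hy)
  have commutator_mem {k : ℕ} {u v : G} (hu : u ∈ D k) (hv : v ∈ D (i + j + 2)) :
      ⁅u, v⁆ ∈ D (n + 1) :=
    h.commutator_le_succ hG (by omega) (Subgroup.commutator_mem_commutator hu hv)
  exact commutatorElement_sq_left_mem_iff_sq_right_mem (commutator_mem hx hxy)
    (commutator_mem hy (commutatorElement_mem_comm.1 hxy))

theorem pow_left_mem_iff (h : CommutatorBound G m n) (hG : IsPowerful 2 G) {i j : ℕ}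
    (hij : i + j = m) (x y : G) :
    ⁅x ^ 2 ^ i, y ^ 2 ^ j⁆ ∈ D (n + 1) ↔ ⁅x, y ^ 2 ^ m⁆ ∈ D (n + 1) := by
  induction i generalizing j with
  | zero => rw [pow_zero, pow_one, ← hij, zero_add]
  | succ i ih =>
    rw [pow_succ, pow_mul, h.sq_left_mem_iff hG (by omega) (pow_mem_sqSeries x i)
      (pow_mem_sqSeries y j), ← pow_mul, ← pow_succ]
    exact ih (by omega)

theorem mem_centralizerMod_iff (hG : IsPowerful 2 G) (hbot : ∃ n, D n = ⊥) {x : G} :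
    x ∈ centralizerMod (D n) (D m) ↔ ∀ y, ⁅x, y ^ 2 ^ m⁆ ∈ D n := by
  simp only [mem_centralizerMod, mem_sqSeries_iff (n := m) hG hbot, forall_exists_index,
    forall_apply_eq_imp_iff]

theorem mem_centralizerMod_of_pow_eq_one (h : CommutatorBound G m n) (hG : IsPowerful 2 G)
    (hbot : ∃ n, D n = ⊥) {x : G} (hx : x ^ 2 ^ m = 1) : x ∈ centralizerMod (D (n + 1)) (D m) := by
  rw [mem_centralizerMod_iff hG hbot]
  intro y
  rw [← h.pow_left_mem_iff hG (add_zero m), hx, commutatorElement_one_left]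
  exact one_mem _

theorem isPowerful_centralizerMod (h : CommutatorBound G m n) (hm : 2 ≤ m) (hG : IsPowerful 2 G)
    (hbot : ∃ n, D n = ⊥) : IsPowerful 2 (centralizerMod (D (n + 1)) (D m)) := by
  obtain ⟨r, rfl⟩ := Nat.exists_eq_add_of_le hm
  set P := centralizerMod (D (n + 1)) (D (2 + r))
  have hPD : ⁅P, D (2 + r)⁆ ≤ D (n + 1) := le_centralizerMod_iff.1 le_rfl
  have hPr : ⁅P, D r⁆ ≤ D (2 + r) := by
    rw [Subgroup.commutator_comm, add_comm]
    exact (Subgroup.commutator_mono le_rfl le_top).trans (commutator_sqSeries_top_le hG r)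
  have hPPr : ⁅⁅P, P⁆, D r⁆ ≤ D (n + 1) := by
    apply commutator_commutator_le_of_rotate
    · rw [Subgroup.commutator_comm]
      exact (Subgroup.commutator_mono le_rfl hPr).trans hPD
    · rw [Subgroup.commutator_comm, Subgroup.commutator_comm (D r)]
      exact (Subgroup.commutator_mono le_rfl hPr).trans hPD
  rw [isPowerful_two_iff, ← Subgroup.map_le_map_iff_of_injective P.subtype_injective,
    Subgroup.map_subtype_commutator, map_subtype_subgroupPow_top, Subgroup.commutator_le]
  intro a ha b hb
  obtain ⟨k, hk⟩ : ∃ k, k ^ 2 ^ 2 = ⁅a, b⁆ := (mem_sqSeries_iff hG hbot).1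
    (commutator_sqSeries_top_le hG 0 (Subgroup.commutator_mem_commutator trivial trivial))
  rw [← hk]
  refine pow_mem_subgroupPow ((mem_centralizerMod_iff hG hbot).2 fun y => ?_) 4
  rw [← h.pow_left_mem_iff hG rfl, hk]
  exact hPPr (Subgroup.commutator_mem_commutator (Subgroup.commutator_mem_commutator ha hb)
    (pow_mem_sqSeries y r))

theorem succ (h : CommutatorBound G m n) (hG : IsPowerful 2 G) (hbot : ∃ n, D n = ⊥)
    (htop : centralizerMod (D (n + 1)) (D m) = ⊤) : CommutatorBound G m (n + 1) := by
  intro i j hij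
  rcases hij.lt_or_eq with hlt | rfl
  · exact h.commutator_le_succ hG hlt
  rw [Subgroup.commutator_le]
  intro x hx y hy
  obtain ⟨u, rfl⟩ := (mem_sqSeries_iff hG hbot).1 hx
  obtain ⟨v, rfl⟩ := (mem_sqSeries_iff hG hbot).1 hy
  rw [h.pow_left_mem_iff hG rfl]
  exact (mem_centralizerMod_iff hG hbot).1 (htop ▸ Subgroup.mem_top u) v

end CommutatorBound

end CommutatorBound

theorem commute_pow_two_pow {G : Type*} [Group G] [Finite G] (hG : IsPGroup 2 G)
    (hpow : IsPowerful 2 G) {m i j : ℕ} (hm : 2 ≤ m) (hij : m ≤ i + j) {g h : G}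
    (hg : g ^ 2 ^ m = 1) (hh : h ^ 2 ^ m = 1) : Commute (g ^ 2 ^ i) (h ^ 2 ^ j) := by
  induction hcard : Nat.card G using Nat.strong_induction_on generalizing G with
  | _ c ih =>
  subst hcard
  have : Fact (Nat.Prime 2) := ⟨Nat.prime_two⟩
  have : Group.IsNilpotent G := hG.isNilpotent
  have hbot := exists_sqSeries_eq_bot hG
  by_cases hP : ∃ n, CommutatorBound G m n ∧ centralizerMod (sqSeries G (n + 1)) (sqSeries G m) ≠ ⊤
  · obtain ⟨n, hn, hne⟩ := hP
    have hlt := lt_of_le_of_ne (Subgroup.card_le_card_group _)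
      (mt (Subgroup.eq_top_of_card_eq _) hne)
    have hcomm := ih _ hlt (hG.to_subgroup _) (hn.isPowerful_centralizerMod hm hpow hbot)
      (g := ⟨g, hn.mem_centralizerMod_of_pow_eq_one hpow hbot hg⟩)
      (h := ⟨h, hn.mem_centralizerMod_of_pow_eq_one hpow hbot hh⟩)
      (Subtype.ext hg) (Subtype.ext hh) rfl
    exact hcomm.map (Subgroup.subtype _)
  · push Not at hP
    have bound : ∀ n, CommutatorBound G m n := fun n =>
      n.rec (.zero m) fun n hn => hn.succ hpow hbot (hP n hn)
    obtain ⟨n, hn⟩ := hbot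
    have hmem := bound n i j hij
      (Subgroup.commutator_mem_commutator (pow_mem_sqSeries g i) (pow_mem_sqSeries h j))
    rwa [hn, Subgroup.mem_bot, commutatorElement_eq_one_iff_commute] at hmem

theorem commutator_le_subgroupPow_of_le_subgroupPow {G : Type*} [Group G] [Finite G]
    (hG : IsPGroup 2 G) (hpow : IsPowerful 2 G) {k : ℕ} {N : Subgroup G} [N.Normal]
    (hN : N ≤ subgroupPow ⊤ (2 ^ k)) : ⁅N, N⁆ ≤ subgroupPow N (2 ^ k) := by
  rcases k.eq_zero_or_pos with rfl | hk
  · rw [pow_zero, subgroupPow_one]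
    exact Subgroup.commutator_le_left N N
  have : Fact (Nat.Prime 2) := ⟨Nat.prime_two⟩
  have : Group.IsNilpotent G := hG.isNilpotent
  have : (subgroupPow N (2 ^ k)).Normal := subgroupPow_normal _
  have hpow' : IsPowerful 2 (G ⧸ subgroupPow N (2 ^ k)) :=
    hpow.of_surjective (QuotientGroup.mk'_surjective _)
  have exists_root : ∀ x ∈ N, ∃ g : G, g ^ 2 ^ k = x := fun x hx =>
    (mem_sqSeries_iff hpow (exists_sqSeries_eq_bot hG)).1 (subgroupPow_top_le_sqSeries k (hN hx))
  have mk_pow_eq_one {g : G} (hg : g ^ 2 ^ k ∈ N) :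
      (g : G ⧸ subgroupPow N (2 ^ k)) ^ 2 ^ (k + k) = 1 := by
    rw [pow_add, pow_mul, ← QuotientGroup.mk_pow, ← QuotientGroup.mk_pow, QuotientGroup.eq_one_iff]
    exact pow_mem_subgroupPow hg _
  rw [Subgroup.commutator_le]
  intro x hx y hy
  obtain ⟨g, rfl⟩ := exists_root x hx
  obtain ⟨h, rfl⟩ := exists_root y hy
  have hcomm := commute_pow_two_pow (hG.to_quotient _) hpow' (m := k + k) (by omega) le_rfl
    (mk_pow_eq_one hx) (mk_pow_eq_one hy)
  rw [← commutatorElement_eq_one_iff_commute, ← QuotientGroup.mk_pow,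
    ← QuotientGroup.mk_pow] at hcomm
  exact (QuotientGroup.eq_one_iff _).1 hcomm

theorem omega_statement_15_general {G : Type*} [Group G] [Finite G] (hG : IsPGroup 2 G)
    (hpow : IsPowerful 2 G) {k : ℕ} {N : Subgroup G} [N.Normal]
    (hN : N ≤ subgroupPow (⊤ : Subgroup G) (2 ^ k)) :
    ∀ x y : ↥N ⧸ subgroupPow (⊤ : Subgroup ↥N) (2 ^ k), x * y = y * x := by
  have hle : commutator N ≤ subgroupPow (⊤ : Subgroup N) (2 ^ k) := by
    rw [← Subgroup.map_le_map_iff_of_injective N.subtype_injective,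
      Subgroup.map_subtype_commutator, map_subtype_subgroupPow_top]
    exact commutator_le_subgroupPow_of_le_subgroupPow hG hpow hN
  have := Subgroup.Normal.quotient_commutative_iff_commutator_le.2 hle
  exact fun x y => mul_comm' x y

theorem omega_statement_15 (G : Type*) [Group G] [Finite G] (hG : IsPGroup 2 G)
    (hpow : IsPowerful 2 G) (i : ℕ) (hi : 1 ≤ i) :
    ∀ x y : ↥(omegaSubgroup 2 i (subgroupPow (⊤ : Subgroup G) 4)) ⧸
        subgroupPow (⊤ : Subgroup ↥(omegaSubgroup 2 i (subgroupPow (⊤ : Subgroup G) 4))) 4,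
      x * y = y * x := by
  have := omegaSubgroup_normal 2 i (H := subgroupPow (⊤ : Subgroup G) 4)
  exact omega_statement_15_general hG hpow (k := 2) (omegaSubgroup_le 2 i _)
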